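/- For every positive integer m ≥ 3: (a) every K ∈ P(m,3) and every K-primitive matrix A satisfy γ(A) ≤ 2m − 1; and (b) there exist K ∈ P(m,3) and a K-primitive matrix A with γ(A) = 2m − 1. Hence the maximum of γ(K) over K ∈ P(m,3) equals 2m − 1. -/

import Mathlib

open Matrix Set Real

noncomputable section

/-- A proper cone in `ℝ^n`: a closed convex cone that is pointed and full. -/
def IsProperCone {n : ℕ} (K : Set (Fin n → ℝ)) : Prop :=
  IsClosed K ∧ (∀ x ∈ K, ∀ y ∈ K, x + y ∈ K) ∧
    (∀ (c : ℝ), 0 ≤ c → ∀ x ∈ K, c • x ∈ K) ∧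
    K ∩ (-K) = {0} ∧ (interior K).Nonempty

/-- The positive hull (cone generated by) finitely many vectors. -/
def ConeGen {n m : ℕ} (y : Fin m → Fin n → ℝ) : Set (Fin n → ℝ) :=
  {x | ∃ c : Fin m → ℝ, (∀ j, 0 ≤ c j) ∧ x = ∑ j, c j • y j}

/-- A polyhedral cone: a proper cone that is the positive hull of finitely many vectors. -/
def IsPolyhedralCone {n : ℕ} (K : Set (Fin n → ℝ)) : Prop :=
  IsProperCone K ∧ ∃ (m : ℕ) (y : Fin m → Fin n → ℝ), K = ConeGen y

/-- `A` is `K`-nonnegative: `A K ⊆ K`. -/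
def KNonneg {n : ℕ} (K : Set (Fin n → ℝ)) (A : Matrix (Fin n) (Fin n) ℝ) : Prop :=
  ∀ x ∈ K, A.mulVec x ∈ K

/-- `A` is `K`-positive: `A` maps `K \ {0}` into the interior of `K`. -/
def KPositive {n : ℕ} (K : Set (Fin n → ℝ)) (A : Matrix (Fin n) (Fin n) ℝ) : Prop :=
  ∀ x ∈ K, x ≠ 0 → A.mulVec x ∈ interior K

/-- `A` is `K`-primitive: `A` is `K`-nonnegative and some power of `A` is `K`-positive. -/
def KPrimitive {n : ℕ} (K : Set (Fin n → ℝ)) (A : Matrix (Fin n) (Fin n) ℝ) : Prop :=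
  KNonneg K A ∧ ∃ k : ℕ, 0 < k ∧ KPositive K (A ^ k)

/-- The exponent `γ(A)` of a `K`-primitive matrix: the least `k ≥ 1` with `A^k` `K`-positive. -/
def expnt {n : ℕ} (K : Set (Fin n → ℝ)) (A : Matrix (Fin n) (Fin n) ℝ) : ℕ :=
  sInf {k : ℕ | 0 < k ∧ KPositive K (A ^ k)}

/-- `x` is an extreme vector of `K`. -/
def IsExtremeVec {n : ℕ} (K : Set (Fin n → ℝ)) (x : Fin n → ℝ) : Prop :=
  x ∈ K ∧ x ≠ 0 ∧ ∀ y ∈ K, ∀ z ∈ K, x = y + z →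
    (∃ a : ℝ, 0 ≤ a ∧ y = a • x) ∧ (∃ b : ℝ, 0 ≤ b ∧ z = b • x)

/-- The set of extreme rays of `K`. -/
def ExtremeRays {n : ℕ} (K : Set (Fin n → ℝ)) : Set (Set (Fin n → ℝ)) :=
  {R | ∃ x, IsExtremeVec K x ∧ R = {y | ∃ c : ℝ, 0 ≤ c ∧ y = c • x}}

/-- `K ∈ P(m,n)`: an `n`-dimensional polyhedral cone in `ℝ^n` with exactly `m` extreme rays.
(A proper cone in `ℝ^n` has nonempty interior, hence is automatically `n`-dimensional.) -/
def MemP {n : ℕ} (m : ℕ) (K : Set (Fin n → ℝ)) : Prop :=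
  IsPolyhedralCone K ∧ (ExtremeRays K).ncard = m

/-- A face of a cone `K`. -/
def IsFace {n : ℕ} (K F : Set (Fin n → ℝ)) : Prop :=
  0 ∈ F ∧ F ⊆ K ∧ (∀ x ∈ F, ∀ y ∈ F, x + y ∈ F) ∧
    (∀ (c : ℝ), 0 ≤ c → ∀ x ∈ F, c • x ∈ F) ∧
    ∀ x ∈ F, ∀ y ∈ K, x - y ∈ K → y ∈ F

/-- `A` is `K`-irreducible: `A` is `K`-nonnegative and leaves invariant no nontrivial face. -/
def KIrreducible {n : ℕ} (K : Set (Fin n → ℝ)) (A : Matrix (Fin n) (Fin n) ℝ) : Prop :=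
  KNonneg K A ∧ ∀ F : Set (Fin n → ℝ), IsFace K F → (∀ x ∈ F, A.mulVec x ∈ F) →
    F = ({0} : Set (Fin n → ℝ)) ∨ F = K

/-! Upper bound, for `m` extreme rays in dimension `n`. Draw an edge from an extreme ray `u` to an
extreme ray `v` if `v` lies in the face generated by `A u`. Every vertex has a successor and, `A`
being primitive, some vertex has two, so every vertex `g` reaches in `l` steps a closed walk of
length `s < m` through some `j`, with `l + s ≤ m`. The faces generated by
`j, A ^ s j, A ^ (2 s) j, …` increase; a supporting functional vanishing at `A ^ (s (n - 1)) j`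
would vanish at the first `n` points of this orbit, hence, its kernel having dimension `n - 1`, at
all of them, which primitivity excludes. So `A ^ (s (n - 1)) j` is interior, and the exponent is at
most `(n - 1) (m - 1) + 1`.

Lower bound. Let `A` scale the axis by `r` and rotate the plane by `t`, and let `x k = A ^ k x₀`
with `x₀ = (1, 1, 0)`. Choose `r` and `t` with `x m = a (x 0 + x 1)`; the first `m` points generate
a cone that `A` preserves, and `x (2 m - 2) = a (x (m - 2) + x (m - 1))` lies in a proper face while
`x (2 m - 1)` is interior. The exponent is therefore `2 m - 1`, and the upper bound shows that the
cone has no fewer than `m` extreme rays. -/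

section Algebra

theorem exists_irredundant_finset_span_eq {R M : Type*} [Semiring R] [AddCommMonoid M]
    [Module R M] {N : Submodule R M} (hN : N.FG) :
    ∃ s : Finset M, Submodule.span R (s : Set M) = N ∧
      ∀ x ∈ s, x ∉ Submodule.span R ((s : Set M) \ {x}) := by
  classical
  obtain ⟨s, hs, hmin⟩ := exists_minimal_of_wellFoundedLT
    (fun s : Finset M => Submodule.span R (s : Set M) = N) hN
  refine ⟨s, hs, fun x hx hxs => ?_⟩
  have hspan : Submodule.span R ((s.erase x : Finset M) : Set M) = N := by
    rw [Finset.coe_erase, ← Submodule.span_insert_eq_span hxs, insert_sdiff_singleton,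
      insert_eq_of_mem (Finset.mem_coe.2 hx), hs]
  exact Finset.notMem_erase x s (hmin hspan (s.erase_subset x) hx)

open Polynomial in
/-- The first `finrank U + 1` vectors of the orbit are dependent, so some nonzero polynomial `p` of
degree at most `finrank U` annihilates `x`, and `X ^ k` may be reduced modulo `p`. -/
theorem pow_apply_mem_of_forall_le_finrank {𝕜 V : Type*} [Field 𝕜] [AddCommGroup V] [Module 𝕜 V]
    (T : Module.End 𝕜 V) (U : Submodule 𝕜 V) [FiniteDimensional 𝕜 U] {x : V}
    (h : ∀ i ≤ Module.finrank 𝕜 U, (T ^ i) x ∈ U) (k : ℕ) : (T ^ k) x ∈ U := by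
  let evalAt : 𝕜[X] →ₗ[𝕜] V := (LinearMap.applyₗ x).comp (aeval T).toLinearMap
  have evalAt_mem : ∀ q ∈ degreeLT 𝕜 (Module.finrank 𝕜 U + 1), evalAt q ∈ U := by
    classical
    suffices degreeLT 𝕜 (Module.finrank 𝕜 U + 1) ≤ U.comap evalAt from this
    rw [degreeLT_eq_span_X_pow, Submodule.span_le]
    intro q hq
    obtain ⟨i, hi, rfl⟩ := Finset.mem_image.1 hq
    simpa [evalAt] using h i (Nat.lt_succ_iff.1 (Finset.mem_range.1 hi))
  obtain ⟨⟨p, hp⟩, hpker, hp0⟩ := Submodule.exists_mem_ne_zero_of_ne_bot <|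
    LinearMap.ker_ne_bot_of_finrank_lt (f := evalAt.restrict evalAt_mem) <| by
      simp [(degreeLTEquiv 𝕜 (Module.finrank 𝕜 U + 1)).finrank_eq]
  have hpx : aeval T p x = 0 := congrArg Subtype.val hpker
  have hp0 : p ≠ 0 := fun h => hp0 (Subtype.ext h)
  have hmod : (T ^ k) x = evalAt (X ^ k % p) := by
    have hdiv := congrArg (fun q => aeval T q x) (EuclideanDomain.div_add_mod' (X ^ k) p)
    simpa [hpx, evalAt] using hdiv.symm
  exact hmod ▸ evalAt_mem _ (mem_degreeLT.2 ((degree_mod_lt _ hp0).trans (mem_degreeLT.1 hp)))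

end Algebra

section Walks

variable {V : Type*}

/-- Length-indexed reachability in a directed graph on `V`: `W n i j` is to be thought of as the
existence of a walk of length `n` from `i` to `j`. -/
structure IsWalkRelation (W : ℕ → V → V → Prop) : Prop where
  refl : ∀ i, W 0 i i
  comp : ∀ {m n i j k}, W m i j → W n j k → W (m + n) i k

variable {W : ℕ → V → V → Prop} {f : V → V}

theorem IsWalkRelation.iterate (hW : IsWalkRelation W)
    (hf : ∀ i, W 1 i (f i)) (n : ℕ) (i : V) : W n i (f^[n] i) := by
  induction n with
  | zero => exact hW.refl i
  | succ n ih => exact f.iterate_succ_apply' n i ▸ hW.comp ih (hf _)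

theorem IsWalkRelation.iterate_of_le (hW : IsWalkRelation W)
    (hf : ∀ i, W 1 i (f i)) {m n : ℕ} (h : m ≤ n) (i : V) :
    W (n - m) (f^[m] i) (f^[n] i) := by
  simpa [← Function.iterate_add_apply, Nat.sub_add_cancel h] using hW.iterate hf (n - m) (f^[m] i)

variable [Fintype V]

theorem exists_iterate_eq_or_bijective (f : V → V) (i : V) :
    (∃ a b, a < b ∧ b ≤ Fintype.card V ∧ b - a < Fintype.card V ∧ f^[a] i = f^[b] i) ∨
      f^[Fintype.card V] i = i ∧
        Function.Bijective fun k : Fin (Fintype.card V) => f^[k] i := by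
  by_cases hinj : Function.Injective fun k : Fin (Fintype.card V) => f^[k] i
  · have hbij := (Fintype.bijective_iff_injective_and_card _).2 ⟨hinj, Fintype.card_fin _⟩
    obtain ⟨⟨c, hc⟩, hci⟩ := hbij.surjective (f^[Fintype.card V] i)
    rcases Nat.eq_zero_or_pos c with rfl | hc0
    · exact .inr ⟨hci.symm, hbij⟩
    · exact .inl ⟨c, _, hc, le_rfl, by omega, hci⟩
  · obtain ⟨⟨a, ha⟩, ⟨b, hb⟩, heq, hab⟩ := Function.not_injective_iff.1 hinj
    rcases lt_or_gt_of_ne (Fin.val_ne_of_ne hab) with h | h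
    · exact .inl ⟨a, b, h, hb.le, by omega, heq⟩
    · exact .inl ⟨b, a, h, ha.le, by omega, heq.symm⟩

/-- If following one chosen successor forever does not run through all of `V`, it closes up early;
otherwise it is a Hamiltonian cycle, which the second successor of `u` shortcuts. -/
theorem IsWalkRelation.exists_short_closed_walk (hW : IsWalkRelation W)
    (hsucc : ∀ i, ∃ j, W 1 i j) {u v w : V} (huv : W 1 u v) (huw : W 1 u w) (hvw : v ≠ w) (i : V) :
    ∃ l s j, 0 < s ∧ s < Fintype.card V ∧ l + s ≤ Fintype.card V ∧ W l i j ∧ W s j j := by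
  choose f hf using hsucc
  rcases exists_iterate_eq_or_bijective f i with ⟨a, b, hab, hb, hba, heq⟩ | ⟨hcycle, -, hsurj⟩
  · refine ⟨a, b - a, f^[a] i, by omega, hba, by omega, hW.iterate hf a i, ?_⟩
    have hloop := hW.iterate_of_le hf hab.le i
    rwa [← heq] at hloop
  obtain ⟨⟨a, ha⟩, rfl⟩ := hsurj u
  obtain ⟨z, hz, hzf⟩ : ∃ z, W 1 (f^[a] i) z ∧ z ≠ f^[a + 1] i := by
    by_cases hv : v = f^[a + 1] i
    · exact ⟨w, huw, hv ▸ hvw.symm⟩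
    · exact ⟨v, huv, hv⟩
  obtain ⟨⟨b, hb⟩, rfl⟩ := hsurj z
  have hbsucc : b ≠ a + 1 := fun h => hzf (by simp only [h])
  have hblast : ¬ (b = 0 ∧ a + 1 = Fintype.card V) := by
    rintro ⟨rfl, ha'⟩
    exact hzf (by rw [ha', hcycle]; rfl)
  rcases le_or_gt b a with hba | hab
  · exact ⟨b, a - b + 1, f^[b] i, by omega, by omega, by omega, hW.iterate hf b i,
      hW.comp (hW.iterate_of_le hf hba i) hz⟩
  · refine ⟨0, a + 1 + (Fintype.card V - b), i, by omega, by omega, by omega, hW.refl i, ?_⟩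
    have hback := hW.iterate_of_le hf hb.le i
    rw [hcycle] at hback
    exact hW.comp (hW.comp (hW.iterate hf a i) hz) hback

end Walks

section FaceOrder

variable {E : Type*} [AddCommGroup E] [Module ℝ E] {C : PointedCone ℝ E} {u v w : E}

/-- `u` lies in the face of the cone `C` generated by `v`. This is a preorder on `C`, and the
linear maps preserving `C` are monotone for it. -/
def FaceLE (C : PointedCone ℝ E) (u v : E) : Prop := ∃ c : ℝ, 0 < c ∧ v - c • u ∈ C

theorem FaceLE.refl (C : PointedCone ℝ E) (u : E) : FaceLE C u u := ⟨1, one_pos, by simp⟩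

theorem FaceLE.trans (huv : FaceLE C u v) (hvw : FaceLE C v w) : FaceLE C u w := by
  obtain ⟨c, hc, huv⟩ := huv
  obtain ⟨d, hd, hvw⟩ := hvw
  refine ⟨d * c, mul_pos hd hc, ?_⟩
  have hsum := C.add_mem hvw (C.smul_mem hd.le huv)
  rwa [smul_sub, smul_smul, sub_add_sub_cancel] at hsum

theorem FaceLE.map {T : Module.End ℝ E} (hT : MapsTo T C C) (h : FaceLE C u v) :
    FaceLE C (T u) (T v) := by
  obtain ⟨c, hc, h⟩ := h
  exact ⟨c, hc, by simpa using hT h⟩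

theorem FaceLE.add_right (hv : v ∈ C) : FaceLE C u (u + v) := ⟨1, one_pos, by simpa⟩

theorem FaceLE.of_smul {c : ℝ} (hc : 0 < c) : FaceLE C u (c • u) := ⟨c, hc, by simp⟩

theorem FaceLE.apply_eq_zero {f : E →ₗ[ℝ] ℝ} (hf : ∀ y ∈ C, 0 ≤ f y) (h : FaceLE C u v)
    (hu : u ∈ C) (hv : f v = 0) : f u = 0 := by
  obtain ⟨c, hc, h⟩ := h
  have hle : 0 ≤ -(c * f u) := by simpa [hv] using hf _ h
  nlinarith [hf u hu]

theorem mem_hull_singleton : u ∈ PointedCone.hull ℝ {v} ↔ ∃ c : ℝ, 0 ≤ c ∧ u = c • v := by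
  rw [PointedCone.hull, Submodule.mem_span_singleton]
  exact ⟨fun ⟨c, h⟩ => ⟨c, c.2, h.symm⟩, fun ⟨c, hc, h⟩ => ⟨⟨c, hc⟩, h.symm⟩⟩

theorem FaceLE.of_mem_hull_singleton (hv : v ∈ C) (hu : u ∈ PointedCone.hull ℝ {v}) :
    FaceLE C u v := by
  obtain ⟨c, hc, rfl⟩ := mem_hull_singleton.1 hu
  refine ⟨(1 + c)⁻¹, by positivity, ?_⟩
  have hsub : v - (1 + c)⁻¹ • c • v = (1 + c)⁻¹ • v := by
    match_scalars
    field_simp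
    ring
  exact hsub ▸ C.smul_mem (by positivity) hv

theorem mem_hull_setOf_faceLE {s : Set E} (hs : s ⊆ C) {x : E} (hx : x ∈ PointedCone.hull ℝ s) :
    x ∈ PointedCone.hull ℝ {g ∈ s | FaceLE C g x} := by
  have hull_mono : ∀ {x y}, FaceLE C x y → PointedCone.hull ℝ {g ∈ s | FaceLE C g x} ≤
      PointedCone.hull ℝ {g ∈ s | FaceLE C g y} :=
    fun hxy => Submodule.span_mono fun _ hg => ⟨hg.1, hg.2.trans hxy⟩
  have hull_le : PointedCone.hull ℝ s ≤ C := Submodule.span_le.2 hs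
  induction hx using Submodule.span_induction with
  | mem x hx => exact PointedCone.subset_hull ⟨hx, .refl C x⟩
  | zero => exact zero_mem _
  | add x y hx hy ihx ihy =>
    exact add_mem (hull_mono (.add_right (hull_le hy)) ihx)
      (hull_mono (add_comm y x ▸ .add_right (hull_le hx)) ihy)
  | smul c x _ ih =>
    rcases eq_zero_or_pos c with rfl | hc
    · simp
    · exact Submodule.smul_mem _ c (hull_mono (.of_smul hc) ih)

theorem exists_ne_zero_faceLE {s : Set E} (hs : s ⊆ C) {x : E} (hx : x ∈ PointedCone.hull ℝ s)
    (hx0 : x ≠ 0) : ∃ g ∈ s, g ≠ 0 ∧ FaceLE C g x := by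
  by_contra! h
  have hbot : PointedCone.hull ℝ {g ∈ s | FaceLE C g x} = ⊥ :=
    Submodule.span_eq_bot.2 fun g hg => not_not.1 fun hg0 => h g hg.1 hg0 hg.2
  exact hx0 (Submodule.mem_bot _ |>.1 (hbot ▸ mem_hull_setOf_faceLE hs hx))

end FaceOrder

section Interior

variable {E : Type*} [AddCommGroup E] [Module ℝ E] [TopologicalSpace E] [IsTopologicalAddGroup E]
  [ContinuousSMul ℝ E] {C : PointedCone ℝ E} {u v x : E}

theorem FaceLE.of_mem_interior (u : E) (hv : v ∈ interior (C : Set E)) : FaceLE C u v := by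
  have hcont : ContinuousAt (fun c : ℝ => v - c • u) 0 := by fun_prop
  have hnear : ∀ᶠ c : ℝ in nhds 0, v - c • u ∈ C :=
    hcont.eventually_mem (by simpa using mem_interior_iff_mem_nhds.1 hv)
  obtain ⟨c, hc, hpos⟩ := (hnear.filter_mono nhdsWithin_le_nhds).and
    (self_mem_nhdsWithin (s := Ioi (0 : ℝ))) |>.exists
  exact ⟨c, hpos, hc⟩

open scoped Pointwise in
theorem FaceLE.mem_interior (h : FaceLE C u v) (hu : u ∈ interior (C : Set E)) :
    v ∈ interior (C : Set E) := by
  obtain ⟨c, hc, h⟩ := h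
  have hcu : c • u ∈ interior (c • (C : Set E)) :=
    interior_smul₀ hc.ne' (C : Set E) ▸ smul_mem_smul_set hu
  have hadd : c • (C : Set E) + C ⊆ C := by
    rintro _ ⟨_, ⟨y, hy, rfl⟩, z, hz, rfl⟩
    exact C.add_mem (C.smul_mem hc.le hy) hz
  simpa using interior_mono hadd (subset_interior_add_left (add_mem_add hcu h))

theorem exists_supporting_functional (hC : (interior (C : Set E)).Nonempty) (hx : x ∈ C)
    (hxi : x ∉ interior (C : Set E)) :
    ∃ f : E →ₗ[ℝ] ℝ, (∀ y ∈ C, 0 ≤ f y) ∧ (∀ y ∈ interior (C : Set E), 0 < f y) ∧ f x = 0 := by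
  obtain ⟨f, hf⟩ := geometric_hahn_banach_point_open C.convex.interior isOpen_interior hxi
  have hfC : ∀ y ∈ C, f x ≤ f y := by
    intro y hy
    refine closure_minimal (fun z hz => (hf z hz).le) (isClosed_Ici.preimage f.continuous) ?_
    rw [C.convex.closure_interior_eq_closure_of_nonempty_interior hC]
    exact subset_closure hy
  have hfx : f x = 0 := by
    have hzero := hfC 0 C.zero_mem
    have hdouble := hfC (x + x) (C.add_mem hx hx)
    simp only [map_zero, map_add] at hzero hdouble
    linarith
  exact ⟨f, fun y hy => hfx ▸ hfC y hy, fun y hy => hfx ▸ hf y hy, hfx⟩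

/-- A supporting functional vanishing at `T ^ (finrank ℝ E - 1)` applied to `x` vanishes on the
start of the orbit of `x`, hence on the whole orbit since its kernel is a proper subspace. -/
theorem pow_apply_mem_interior [FiniteDimensional ℝ E] {T : Module.End ℝ E} (hT : MapsTo T C C)
    (hx : x ∈ C) (hle : FaceLE C x (T x)) {k : ℕ} (hk : (T ^ k) x ∈ interior (C : Set E)) :
    (T ^ (Module.finrank ℝ E - 1)) x ∈ interior (C : Set E) := by
  have hpow : ∀ n, MapsTo ⇑(T ^ n) C C := fun n => by
    simpa only [Module.End.coe_pow] using hT.iterate n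
  have hmono : ∀ {i j}, i ≤ j → FaceLE C ((T ^ i) x) ((T ^ j) x) := by
    intro i j hij
    induction j, hij using Nat.le_induction with
    | base => exact .refl C _
    | succ j _ ih => exact ih.trans (pow_succ T j ▸ hle.map (hpow j))
  by_contra hni
  obtain ⟨f, hfC, hfint, hf0⟩ := exists_supporting_functional ⟨_, hk⟩ (hpow _ hx) hni
  have hker : Module.finrank ℝ f.ker < Module.finrank ℝ E := by
    refine Submodule.finrank_lt fun htop => (hfint _ hk).ne' ?_
    rw [LinearMap.ker_eq_top.1 htop, LinearMap.zero_apply]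
  refine (hfint _ hk).ne' (pow_apply_mem_of_forall_le_finrank T f.ker (fun i hi => ?_) k)
  exact (hmono (by omega)).apply_eq_zero hfC (hpow i hx) hf0

end Interior

section ExtremeRays

variable {n : ℕ} {C : PointedCone ℝ (Fin n → ℝ)} {x y : Fin n → ℝ}

theorem IsProperCone.exists_pointedCone {K : Set (Fin n → ℝ)} (hK : IsProperCone K) :
    ∃ C : PointedCone ℝ (Fin n → ℝ), (C : Set (Fin n → ℝ)) = K := by
  obtain ⟨-, hadd, hsmul, -, x, hx⟩ := hK
  have hzero : (0 : Fin n → ℝ) ∈ K := zero_smul ℝ x ▸ hsmul 0 le_rfl x (interior_subset hx)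
  exact ⟨⟨⟨⟨K, fun hx hy => hadd _ hx _ hy⟩, hzero⟩, fun c x hx => hsmul c c.2 x hx⟩, rfl⟩

theorem coneGen_eq_hull {m : ℕ} (y : Fin m → Fin n → ℝ) :
    ConeGen y = (PointedCone.hull ℝ (range y) : Set (Fin n → ℝ)) := by
  ext x
  rw [SetLike.mem_coe, PointedCone.hull, Submodule.mem_span_range_iff_exists_fun]
  exact ⟨fun ⟨c, hc, hx⟩ => ⟨fun j => ⟨c j, hc j⟩, hx.symm⟩,
    fun ⟨c, hx⟩ => ⟨fun j => c j, fun j => (c j).2, hx.symm⟩⟩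

theorem mem_extremeRays {K : Set (Fin n → ℝ)} {R : Set (Fin n → ℝ)} :
    R ∈ ExtremeRays K ↔ ∃ x, IsExtremeVec K x ∧ (PointedCone.hull ℝ {x} : Set _) = R := by
  have hray : ∀ x : Fin n → ℝ,
      {y | ∃ c : ℝ, 0 ≤ c ∧ y = c • x} = (PointedCone.hull ℝ {x} : Set _) :=
    fun x => ext fun y => mem_hull_singleton.symm
  simp only [ExtremeRays, hray, mem_ofPred_eq, eq_comm (a := R)]

theorem hull_singleton_eq_of_mem (h : y ∈ PointedCone.hull ℝ {x}) (hy : y ≠ 0) :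
    PointedCone.hull ℝ {y} = PointedCone.hull ℝ {x} := by
  obtain ⟨c, rfl⟩ := Submodule.mem_span_singleton.1 h
  exact Submodule.span_singleton_smul_eq (IsUnit.mk0 c (left_ne_zero_of_smul hy)) x

theorem IsExtremeVec.mem_hull_of_faceLE (hx : IsExtremeVec (C : Set (Fin n → ℝ)) x) (hy : y ∈ C)
    (h : FaceLE C y x) : y ∈ PointedCone.hull ℝ {x} := by
  obtain ⟨c, hc, h⟩ := h
  have hcy := (hx.2.2 _ (C.smul_mem hc.le hy) _ h (add_sub_cancel _ _).symm).1
  simpa [smul_smul, hc.ne'] using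
    (PointedCone.hull ℝ {x}).smul_mem (inv_nonneg.2 hc.le) (mem_hull_singleton.2 hcy)

theorem IsExtremeVec.notMem_interior (hx : IsExtremeVec (C : Set (Fin n → ℝ)) x) (hn : 2 ≤ n) :
    x ∉ interior (C : Set (Fin n → ℝ)) := by
  intro hxi
  have hspan : ∀ v, ∃ b : ℝ, b • x = v := by
    intro v
    obtain ⟨c, hc, hv⟩ := FaceLE.of_mem_interior v hxi
    obtain ⟨a, -, ha⟩ := mem_hull_singleton.1 (hx.mem_hull_of_faceLE hv (.of_mem_interior _ hxi))
    refine ⟨c⁻¹ * (1 - a), ?_⟩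
    rw [mul_smul, sub_smul, one_smul, ← ha, sub_sub_cancel, inv_smul_smul₀ hc.ne']
  have hfinrank := finrank_le_one x hspan
  rw [Module.finrank_fin_fun] at hfinrank
  omega

theorem isExtremeVec_of_notMem_hull_diff (hC : (C : ConvexCone ℝ (Fin n → ℝ)).Salient)
    {s : Set (Fin n → ℝ)} (hs : PointedCone.hull ℝ s = C) (hx : x ∈ s)
    (hxs : x ∉ PointedCone.hull ℝ (s \ {x})) : IsExtremeVec (C : Set (Fin n → ℝ)) x := by
  have hxC : x ∈ C := hs ▸ PointedCone.subset_hull hx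
  have hle : PointedCone.hull ℝ (s \ {x}) ≤ C := hs ▸ Submodule.span_mono sdiff_subset
  have hdecomp : ∀ y ∈ C, ∃ a : ℝ, 0 ≤ a ∧
      ∃ y' ∈ PointedCone.hull ℝ (s \ {x}), y = a • x + y' := by
    intro y hy
    rw [← hs, ← insert_eq_of_mem hx, ← insert_sdiff_singleton, PointedCone.hull,
      Submodule.mem_span_insert] at hy
    obtain ⟨a, y', hy', hy⟩ := hy
    exact ⟨a, a.2, y', hy', hy⟩
  have hleft : ∀ y ∈ C, ∀ z ∈ C, x = y + z → ∃ a : ℝ, 0 ≤ a ∧ y = a • x := by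
    intro y hy z hz hyz
    obtain ⟨a, ha, y', hy', rfl⟩ := hdecomp y hy
    obtain ⟨b, -, z', hz', rfl⟩ := hdecomp z hz
    rcases lt_or_ge (a + b) 1 with hab | hab
    · have hsum : x = (1 - (a + b))⁻¹ • (y' + z') := by
        rw [eq_inv_smul_iff₀ (sub_pos.2 hab).ne']
        linear_combination (norm := module) hyz
      have hmem := (PointedCone.hull ℝ (s \ {x})).smul_mem (inv_nonneg.2 (sub_pos.2 hab).le)
        (add_mem hy' hz')
      exact absurd (by rwa [← hsum] at hmem) hxs
    · have hneg : -y' = (a + b - 1) • x + z' := by linear_combination (norm := module) hyz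
      have hy'0 : y' = 0 := by
        by_contra hne
        refine hC y' (hle hy') hne (?_ : -y' ∈ C)
        exact hneg ▸ add_mem (C.smul_mem (sub_nonneg.2 hab) hxC) (hle hz')
      exact ⟨a, ha, by rw [hy'0, add_zero]⟩
  refine ⟨hxC, fun h0 => hxs (h0 ▸ zero_mem _), fun y hy z hz hyz => ⟨hleft y hy z hz hyz, ?_⟩⟩
  exact hleft z hz y hy (add_comm y z ▸ hyz)

theorem extremeRays_subset_image {s : Set (Fin n → ℝ)} (hs : PointedCone.hull ℝ s = C) :
    ExtremeRays (C : Set (Fin n → ℝ)) ⊆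
      (fun x => (PointedCone.hull ℝ {x} : Set (Fin n → ℝ))) '' s := by
  intro R hR
  obtain ⟨x, hx, rfl⟩ := mem_extremeRays.1 hR
  have hsC : s ⊆ C := hs ▸ PointedCone.subset_hull
  obtain ⟨g, hg, hg0, hgx⟩ := exists_ne_zero_faceLE hsC (hs ▸ hx.1) hx.2.1
  exact ⟨g, hg, congrArg _ (hull_singleton_eq_of_mem (hx.mem_hull_of_faceLE (hsC hg) hgx) hg0)⟩

theorem ncard_extremeRays_le {m : ℕ} (y : Fin m → Fin n → ℝ) :
    (ExtremeRays (ConeGen y)).ncard ≤ m := by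
  have hsub := extremeRays_subset_image (rfl : PointedCone.hull ℝ (range y) = _)
  rw [coneGen_eq_hull]
  calc _ ≤ _ := ncard_le_ncard hsub ((finite_range y).image _)
    _ ≤ (range y).ncard := ncard_image_le (finite_range y)
    _ ≤ m := by simpa [ncard_univ] using ncard_image_le (f := y) (s := univ) finite_univ

theorem exists_extreme_generators (hfg : C.FG) (hC : (C : ConvexCone ℝ (Fin n → ℝ)).Salient) :
    ∃ s : Finset (Fin n → ℝ), PointedCone.hull ℝ (s : Set (Fin n → ℝ)) = C ∧
      (∀ x ∈ s, IsExtremeVec (C : Set (Fin n → ℝ)) x) ∧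
      s.card = (ExtremeRays (C : Set (Fin n → ℝ))).ncard := by
  obtain ⟨s, hs, hirr⟩ := exists_irredundant_finset_span_eq hfg
  have hext : ∀ x ∈ s, IsExtremeVec (C : Set (Fin n → ℝ)) x :=
    fun x hx => isExtremeVec_of_notMem_hull_diff hC hs hx (hirr x hx)
  have hrays : ExtremeRays (C : Set (Fin n → ℝ)) =
      (fun x => (PointedCone.hull ℝ {x} : Set (Fin n → ℝ))) '' (s : Set (Fin n → ℝ)) :=
    (extremeRays_subset_image hs).antisymm
      (image_subset_iff.2 fun x hx => mem_extremeRays.2 ⟨x, hext x hx, rfl⟩)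
  have hinj : InjOn (fun x => (PointedCone.hull ℝ {x} : Set (Fin n → ℝ)))
      (s : Set (Fin n → ℝ)) := by
    intro x hx y hy hxy
    by_contra hne
    have hxy' : x ∈ PointedCone.hull ℝ {y} :=
      (SetLike.coe_injective hxy).le (PointedCone.subset_hull rfl)
    have hyx : y ∈ (s : Set (Fin n → ℝ)) \ {x} := ⟨hy, Ne.symm hne⟩
    exact hirr x hx (Submodule.span_mono (singleton_subset_iff.2 hyx) hxy')
  exact ⟨s, hs, hext, by rw [hrays, hinj.ncard_image, ncard_coe_finset]⟩

end ExtremeRays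

section UpperBound

variable {n : ℕ} {C : PointedCone ℝ (Fin n → ℝ)} {A : Matrix (Fin n) (Fin n) ℝ}
  {s : Finset (Fin n → ℝ)} {u v : Fin n → ℝ}

theorem pow_add_mulVec (A : Matrix (Fin n) (Fin n) ℝ) (a b : ℕ) (x : Fin n → ℝ) :
    A ^ (a + b) *ᵥ x = A ^ b *ᵥ A ^ a *ᵥ x := by
  rw [mulVec_mulVec, ← pow_add, add_comm]

theorem KNonneg.pow {K : Set (Fin n → ℝ)} (hA : KNonneg K A) (k : ℕ) : KNonneg K (A ^ k) := by
  induction k with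
  | zero => simp [KNonneg]
  | succ k ih => exact fun x hx => pow_add_mulVec A k 1 x ▸ (pow_one A).symm ▸ hA _ (ih x hx)

theorem KNonneg.faceLE_mulVec (hA : KNonneg (C : Set (Fin n → ℝ)) A) (h : FaceLE C u v) :
    FaceLE C (A *ᵥ u) (A *ᵥ v) :=
  h.map (T := toLin' A) hA

theorem KNonneg.kPositive_of_generators {t : Set (Fin n → ℝ)} (hs : PointedCone.hull ℝ t = C)
    (hA : KNonneg (C : Set (Fin n → ℝ)) A)
    (hpos : ∀ g ∈ t, A *ᵥ g ∈ interior (C : Set (Fin n → ℝ))) :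
    KPositive (C : Set (Fin n → ℝ)) A := by
  intro x hx hx0
  obtain ⟨g, hg, -, hgx⟩ := exists_ne_zero_faceLE (hs ▸ PointedCone.subset_hull) (hs ▸ hx) hx0
  exact (hA.faceLE_mulVec hgx).mem_interior (hpos g hg)

theorem KNonneg.mulVec_pow_mem_interior (hA : KNonneg (C : Set (Fin n → ℝ)) A) (hu : u ∈ C)
    (hle : FaceLE C u (A *ᵥ u)) {k : ℕ} (hk : A ^ k *ᵥ u ∈ interior (C : Set (Fin n → ℝ))) :
    A ^ (n - 1) *ᵥ u ∈ interior (C : Set (Fin n → ℝ)) := by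
  have h := pow_apply_mem_interior (T := toLin' A) hA hu hle (k := k)
  simp only [← toLin'_pow, toLin'_apply, Module.finrank_fin_fun] at h
  exact h hk

/-- `A ^ k *ᵥ u` lies in the face generated by the interior point `A ^ (k + 1) *ᵥ u`; apply `A`. -/
theorem KNonneg.pow_mulVec_mem_interior_of_le (hA : KNonneg (C : Set (Fin n → ℝ)) A) {k l : ℕ}
    (hk0 : 0 < k) (hkl : k ≤ l) (hk : A ^ k *ᵥ u ∈ interior (C : Set (Fin n → ℝ))) :
    A ^ l *ᵥ u ∈ interior (C : Set (Fin n → ℝ)) := by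
  induction l, hkl using Nat.le_induction with
  | base => exact hk
  | succ l hkl ih =>
    obtain ⟨l, rfl⟩ := Nat.exists_eq_succ_of_ne_zero (hk0.trans_le hkl).ne'
    have hle := hA.faceLE_mulVec (.of_mem_interior (A ^ l *ᵥ u) ih)
    rw [mulVec_mulVec, mulVec_mulVec, ← pow_succ', ← pow_succ'] at hle
    exact hle.mem_interior ih

theorem KNonneg.isWalkRelation (hA : KNonneg (C : Set (Fin n → ℝ)) A) :
    IsWalkRelation fun (k : ℕ) (g h : s) => FaceLE C (h : Fin n → ℝ) (A ^ k *ᵥ g) where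
  refl g := by simpa using FaceLE.refl C _
  comp hgh hhk := hhk.trans (pow_add_mulVec A _ _ _ ▸ (hA.pow _).faceLE_mulVec hgh)

theorem KPrimitive.mulVec_ne_zero (hA : KPrimitive (C : Set (Fin n → ℝ)) A) (hn : 2 ≤ n)
    (hu : IsExtremeVec (C : Set (Fin n → ℝ)) u) : A *ᵥ u ≠ 0 := by
  obtain ⟨-, k, hk, hpos⟩ := hA
  intro h0
  have hzero : (0 : Fin n → ℝ) ∈ interior (C : Set (Fin n → ℝ)) := by
    have hAu := hpos u hu.1 hu.2.1
    rwa [← Nat.add_sub_cancel' hk, pow_add_mulVec, pow_one, h0, mulVec_zero] at hAu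
  have hle : FaceLE C 0 u := ⟨1, one_pos, by simpa using hu.1⟩
  exact hu.notMem_interior hn (hle.mem_interior hzero)

/-- Otherwise `A` would permute the extreme rays among themselves and no power could map one of them
into the interior. -/
theorem KPrimitive.exists_two_faceLE (hA : KPrimitive (C : Set (Fin n → ℝ)) A) (hn : 2 ≤ n)
    (hs : PointedCone.hull ℝ (s : Set (Fin n → ℝ)) = C)
    (hext : ∀ x ∈ s, IsExtremeVec (C : Set (Fin n → ℝ)) x) (hne : s.Nonempty) :
    ∃ u v w : s, FaceLE C v.1 (A *ᵥ u) ∧ FaceLE C w.1 (A *ᵥ u) ∧ v ≠ w := by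
  by_contra! hunique
  obtain ⟨g₀, hg₀⟩ := hne
  have hsC : (s : Set (Fin n → ℝ)) ⊆ C := hs ▸ PointedCone.subset_hull
  have hAray : ∀ g : s, ∃ h : s, A *ᵥ g ∈ PointedCone.hull ℝ {h.1} := by
    intro g
    have hAg : A *ᵥ g ∈ PointedCone.hull ℝ (s : Set (Fin n → ℝ)) := hs ▸ hA.1 g (hsC g.2)
    obtain ⟨h, hh, -, hhg⟩ := exists_ne_zero_faceLE hsC hAg (hA.mulVec_ne_zero hn (hext g g.2))
    refine ⟨⟨h, hh⟩, Submodule.span_mono ?_ (mem_hull_setOf_faceLE hsC hAg)⟩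
    exact fun w hw => congrArg Subtype.val (hunique g ⟨w, hw.1⟩ ⟨h, hh⟩ hw.2 hhg)
  have hAkray : ∀ k, ∃ h : s, A ^ k *ᵥ g₀ ∈ PointedCone.hull ℝ {h.1} := by
    intro k
    induction k with
    | zero => exact ⟨⟨g₀, hg₀⟩, by simp⟩
    | succ k ih =>
      obtain ⟨h, hh⟩ := ih
      obtain ⟨c, hc, hAk⟩ := mem_hull_singleton.1 hh
      obtain ⟨h', hh'⟩ := hAray h
      refine ⟨h', ?_⟩
      rw [pow_add_mulVec, pow_one, hAk, mulVec_smul]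
      exact PointedCone.smul_mem _ hc hh'
  obtain ⟨-, k, -, hpos⟩ := hA
  obtain ⟨h, hh⟩ := hAkray k
  exact (hext h h.2).notMem_interior hn
    ((FaceLE.of_mem_hull_singleton (hsC h.2) hh).mem_interior (hpos g₀ (hsC hg₀) (hext g₀ hg₀).2.1))

theorem KPrimitive.pow_mulVec_mem_interior (hA : KPrimitive (C : Set (Fin n → ℝ)) A) (hn : 2 ≤ n)
    (hs : PointedCone.hull ℝ (s : Set (Fin n → ℝ)) = C)
    (hext : ∀ x ∈ s, IsExtremeVec (C : Set (Fin n → ℝ)) x) {g : Fin n → ℝ} (hg : g ∈ s) :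
    A ^ ((n - 1) * (s.card - 1) + 1) *ᵥ g ∈ interior (C : Set (Fin n → ℝ)) := by
  have hsC : (s : Set (Fin n → ℝ)) ⊆ C := hs ▸ PointedCone.subset_hull
  have hsucc : ∀ i : s, ∃ j : s, FaceLE C j.1 (A ^ 1 *ᵥ i) := by
    intro i
    obtain ⟨j, hj, -, hji⟩ := exists_ne_zero_faceLE hsC (hs ▸ hA.1 i (hsC i.2))
      (hA.mulVec_ne_zero hn (hext i i.2))
    exact ⟨⟨j, hj⟩, by rwa [pow_one]⟩
  obtain ⟨u, v, w, huv, huw, hvw⟩ := hA.exists_two_faceLE hn hs hext ⟨g, hg⟩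
  rw [← pow_one A] at huv huw
  obtain ⟨l, t, j, ht0, ht, hlt, hgj, hjj⟩ :=
    hA.1.isWalkRelation.exists_short_closed_walk hsucc huv huw hvw ⟨g, hg⟩
  rw [Fintype.card_coe] at ht hlt
  obtain ⟨k, hk, hpos⟩ := hA.2
  have hj : (A ^ t) ^ k *ᵥ j.1 ∈ interior (C : Set (Fin n → ℝ)) := by
    rw [← pow_mul]
    exact hA.1.pow_mulVec_mem_interior_of_le hk (Nat.le_mul_of_pos_left k ht0)
      (hpos j (hsC j.2) (hext j j.2).2.1)
  have hloop := (hA.1.pow t).mulVec_pow_mem_interior (hsC j.2) hjj hj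
  rw [← pow_mul] at hloop
  have hwalk : A ^ (l + t * (n - 1)) *ᵥ g ∈ interior (C : Set (Fin n → ℝ)) := by
    rw [pow_add_mulVec]
    exact ((hA.1.pow _).faceLE_mulVec hgj).mem_interior hloop
  refine hA.1.pow_mulVec_mem_interior_of_le (Nat.add_pos_right _ (Nat.mul_pos ht0 (by omega)))
    ?_ hwalk
  obtain ⟨q, hq⟩ : ∃ q, n - 1 = q + 1 := ⟨n - 2, by omega⟩
  obtain ⟨d, hd⟩ : ∃ d, s.card - 1 = d + t := ⟨s.card - 1 - t, by omega⟩
  rw [hq, hd]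
  nlinarith [show l ≤ d + 1 by omega]

theorem KPrimitive.expnt_le {K : Set (Fin n → ℝ)} (hA : KPrimitive K A) (hn : 2 ≤ n)
    (hK : IsPolyhedralCone K) : expnt K A ≤ (n - 1) * ((ExtremeRays K).ncard - 1) + 1 := by
  obtain ⟨hproper, m, y, hy⟩ := hK
  obtain ⟨C, rfl⟩ := hproper.exists_pointedCone
  have hCy : C = PointedCone.hull ℝ (range y) :=
    SetLike.coe_injective (hy.trans (coneGen_eq_hull y))
  have hfg : C.FG := hCy ▸ Submodule.fg_span (finite_range y)
  obtain ⟨s, hs, hext, hcard⟩ := exists_extreme_generators hfg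
    (C.salient_iff_inter_neg_eq_singleton.2 hproper.2.2.2.1)
  rw [← hcard]
  exact Nat.sInf_le ⟨Nat.succ_pos _, (hA.1.pow _).kPositive_of_generators hs
    fun g hg => hA.pow_mulVec_mem_interior hn hs hext hg⟩

end UpperBound

section ConeGen

variable {n m : ℕ} {y : Fin m → Fin n → ℝ} {f : (Fin n → ℝ) →ₗ[ℝ] ℝ}

/-- The functional `f` bounds the coefficients along a convergent sequence, so they subconverge. -/
theorem isClosed_coneGen (hf : ∀ j, 0 < f (y j)) : IsClosed (ConeGen y) := by
  refine IsSeqClosed.isClosed fun u x hu hx => ?_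
  choose c hc hcu using hu
  obtain ⟨B, hB⟩ := ((f.continuous_of_finiteDimensional.tendsto x).comp hx).bddAbove_range
  have hbound : ∀ i, c i ∈ Icc (0 : Fin m → ℝ) fun j => B / f (y j) := by
    refine fun i => ⟨hc i, fun j => (le_div_iff₀ (hf j)).2 ?_⟩
    calc c i j * f (y j) ≤ ∑ l, c i l * f (y l) :=
          Finset.single_le_sum (f := fun l => c i l * f (y l))
            (fun l _ => mul_nonneg (hc i l) (hf l).le) (Finset.mem_univ j)
      _ = f (u i) := by simp [hcu i]
      _ ≤ B := hB ⟨i, rfl⟩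
  obtain ⟨d, hd, φ, hφ, hlim⟩ := isCompact_Icc.tendsto_subseq hbound
  have hcont : Continuous fun e : Fin m → ℝ => ∑ j, e j • y j := by fun_prop
  refine ⟨d, hd.1, tendsto_nhds_unique (hx.comp hφ.tendsto_atTop) ?_⟩
  exact ((hcont.tendsto d).comp hlim).congr fun i => (hcu (φ i)).symm

theorem eq_zero_of_mem_coneGen (hf : ∀ j, 0 < f (y j)) {u : Fin n → ℝ} (hu : u ∈ ConeGen y)
    (hfu : f u ≤ 0) : u = 0 := by
  obtain ⟨c, hc, rfl⟩ := hu
  have hnonneg : ∀ j ∈ Finset.univ, 0 ≤ c j * f (y j) := fun j _ => mul_nonneg (hc j) (hf j).le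
  simp only [map_sum, map_smul, smul_eq_mul] at hfu
  have hzero := (Finset.sum_eq_zero_iff_of_nonneg hnonneg).1
    (hfu.antisymm (Finset.sum_nonneg hnonneg))
  refine Finset.sum_eq_zero fun j hj => ?_
  rw [(mul_eq_zero.1 (hzero j hj)).resolve_right (hf j).ne', zero_smul]

theorem isPolyhedralCone_coneGen (hf : ∀ j, 0 < f (y j)) (hint : (interior (ConeGen y)).Nonempty) :
    IsPolyhedralCone (ConeGen y) := by
  have hhull := coneGen_eq_hull y
  refine ⟨⟨isClosed_coneGen hf, ?_, ?_, ?_, hint⟩, m, y, rfl⟩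
  · exact hhull ▸ fun x hx z hz => add_mem hx hz
  · exact hhull ▸ fun c hc x hx => PointedCone.smul_mem _ hc hx
  · refine eq_singleton_iff_unique_mem.2 ⟨by simp [hhull], fun u ⟨hu, hneg⟩ => ?_⟩
    rcases le_total (f u) 0 with h | h
    · exact eq_zero_of_mem_coneGen hf hu h
    · exact neg_eq_zero.1 (eq_zero_of_mem_coneGen hf hneg (by simpa))

theorem sum_smul_mem_interior {E ι : Type*} [AddCommGroup E] [Module ℝ E] [TopologicalSpace E]
    [IsTopologicalAddGroup E] [ContinuousSMul ℝ E] [T2Space E] [FiniteDimensional ℝ E] [Fintype ι]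
    {C : PointedCone ℝ E} (b : Module.Basis ι ℝ E) (hb : ∀ i, b i ∈ C) {c : ι → ℝ}
    (hc : ∀ i, 0 < c i) : ∑ i, c i • b i ∈ interior (C : Set E) := by
  have hopen : IsOpen {v | ∀ i, 0 < b.coord i v} := by
    rw [ofPred_forall]
    exact isOpen_iInter_of_finite fun i =>
      isOpen_lt continuous_const (b.coord i).continuous_of_finiteDimensional
  refine interior_maximal (fun v hv => ?_) hopen fun i => ?_
  · rw [← b.sum_repr v]
    exact sum_mem fun i _ => C.smul_mem (hv i).le (hb i)
  · exact (congrFun (b.repr_sum_self c) i).symm ▸ hc i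

end ConeGen

section OrbitCone

variable {n m : ℕ} {A : Matrix (Fin n) (Fin n) ℝ} {v : Fin n → ℝ}

/-- The cone generated by the first `m` vectors of the orbit of `v` under `A`. -/
def orbitCone (A : Matrix (Fin n) (Fin n) ℝ) (v : Fin n → ℝ) (m : ℕ) : PointedCone ℝ (Fin n → ℝ) :=
  PointedCone.hull ℝ (range fun j : Fin m => A ^ (j : ℕ) *ᵥ v)

theorem pow_mulVec_mem_orbitCone {k : ℕ} (hk : k < m) : A ^ k *ᵥ v ∈ orbitCone A v m :=
  PointedCone.subset_hull ⟨⟨k, hk⟩, rfl⟩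

theorem kNonneg_orbitCone (h : A ^ m *ᵥ v ∈ orbitCone A v m) :
    KNonneg (orbitCone A v m : Set (Fin n → ℝ)) A := by
  suffices orbitCone A v m ≤ (orbitCone A v m).comap (toLin' A) from fun x hx => this hx
  refine Submodule.span_le.2 ?_
  rintro _ ⟨j, rfl⟩
  change A *ᵥ A ^ (j : ℕ) *ᵥ v ∈ orbitCone A v m
  rw [mulVec_mulVec, ← pow_succ']
  rcases Nat.lt_or_eq_of_le j.2 with hj | hj
  · exact pow_mulVec_mem_orbitCone hj
  · rwa [show (j : ℕ) + 1 = m from hj]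

theorem kPositive_pow_orbitCone (hA : KNonneg (orbitCone A v m : Set (Fin n → ℝ)) A) {N : ℕ}
    (hN : A ^ (N + 1) *ᵥ v ∈ interior (orbitCone A v m : Set (Fin n → ℝ))) :
    KPositive (orbitCone A v m : Set (Fin n → ℝ)) (A ^ (N + 1)) := by
  refine (hA.pow _).kPositive_of_generators rfl ?_
  rintro _ ⟨j, rfl⟩
  rw [← pow_add_mulVec]
  exact hA.pow_mulVec_mem_interior_of_le N.succ_pos (by omega) hN

theorem expnt_orbitCone (hA : KNonneg (orbitCone A v m : Set (Fin n → ℝ)) A)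
    (hm : 0 < m) {N : ℕ} (hN : A ^ (N + 1) *ᵥ v ∈ interior (orbitCone A v m : Set (Fin n → ℝ)))
    (hN' : A ^ N *ᵥ v ∉ interior (orbitCone A v m : Set (Fin n → ℝ))) (h0 : ∀ k, A ^ k *ᵥ v ≠ 0) :
    expnt (orbitCone A v m : Set (Fin n → ℝ)) A = N + 1 := by
  have hmem : N + 1 ∈ {k | 0 < k ∧ KPositive (orbitCone A v m : Set (Fin n → ℝ)) (A ^ k)} :=
    ⟨N.succ_pos, kPositive_pow_orbitCone hA hN⟩
  refine le_antisymm (Nat.sInf_le hmem) (le_csInf ⟨_, hmem⟩ fun k hk => ?_)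
  by_contra! hlt
  have hv : v ∈ orbitCone A v m := by simpa using pow_mulVec_mem_orbitCone (A := A) (v := v) hm
  have hpos := hk.2 (A ^ (N - k) *ᵥ v) (hA.pow _ v hv) (h0 _)
  rw [← pow_add_mulVec, Nat.sub_add_cancel (by omega)] at hpos
  exact hN' hpos

end OrbitCone

section Example

variable {r t a : ℝ} {k m q : ℕ}

/-- The `k`-th point of the orbit of `(1, 1, 0)` under `orbitMatrix r t`, in closed form. -/
def orbitPoint (r t : ℝ) (k : ℕ) : Fin 3 → ℝ := ![r ^ k, cos (k * t), sin (k * t)]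

/-- The block diagonal matrix scaling the axis by `r` and rotating the plane by the angle `t`. -/
def orbitMatrix (r t : ℝ) : Matrix (Fin 3) (Fin 3) ℝ :=
  !![r, 0, 0; 0, cos t, -sin t; 0, sin t, cos t]

theorem orbitMatrix_mulVec_orbitPoint (r t : ℝ) (k : ℕ) :
    orbitMatrix r t *ᵥ orbitPoint r t k = orbitPoint r t (k + 1) := by
  have hangle : ((k + 1 : ℕ) : ℝ) * t = k * t + t := by push_cast; ring
  ext i
  fin_cases i
  · simp [orbitMatrix, orbitPoint]
    ring
  · simp only [orbitPoint, hangle, cos_add]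
    simp [orbitMatrix]
    ring
  · simp only [orbitPoint, hangle, sin_add]
    simp [orbitMatrix]
    ring

theorem orbitMatrix_pow_mulVec_orbitPoint (r t : ℝ) (k j : ℕ) :
    orbitMatrix r t ^ k *ᵥ orbitPoint r t j = orbitPoint r t (j + k) := by
  induction k with
  | zero => simp
  | succ k ih => rw [pow_add_mulVec, pow_one, ih, orbitMatrix_mulVec_orbitPoint, add_assoc]

theorem det_orbitMatrix (r t : ℝ) : (orbitMatrix r t).det = r := by
  simp [orbitMatrix, det_fin_three]
  linear_combination r * cos_sq_add_sin_sq t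

theorem det_mulVec_fin_three (A : Matrix (Fin 3) (Fin 3) ℝ) (u v w : Fin 3 → ℝ) :
    det (of ![A *ᵥ u, A *ᵥ v, A *ᵥ w]) = A.det * det (of ![u, v, w]) := by
  have hrows : of ![A *ᵥ u, A *ᵥ v, A *ᵥ w] = of ![u, v, w] * Aᵀ := by
    ext i j
    fin_cases i <;> simp [mul_apply, mulVec, dotProduct, mul_comm]
  rw [hrows, det_mul, det_transpose, mul_comm]

theorem det_orbitPoint_add (r t : ℝ) (j p q s : ℕ) :
    det (of ![orbitPoint r t (p + j), orbitPoint r t (q + j), orbitPoint r t (s + j)]) =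
      r ^ j * det (of ![orbitPoint r t p, orbitPoint r t q, orbitPoint r t s]) := by
  have h := det_mulVec_fin_three (orbitMatrix r t ^ j) (orbitPoint r t p) (orbitPoint r t q)
    (orbitPoint r t s)
  simpa only [orbitMatrix_pow_mulVec_orbitPoint, det_pow, det_orbitMatrix] using h

/-- The determinant of the orbit points `0`, `q` and `q + 1`. Up to powers of `r`, its sign tells
on which side of the plane through two consecutive orbit points an earlier one lies. -/
def orbitDet (r t : ℝ) (q : ℕ) : ℝ :=
  det (of ![orbitPoint r t 0, orbitPoint r t q, orbitPoint r t (q + 1)])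

theorem orbitDet_zero (r t : ℝ) : orbitDet r t 0 = 0 := by
  simp [orbitDet, orbitPoint, det_fin_three]

theorem orbitDet_succ_sub (r t : ℝ) (q : ℕ) : orbitDet r t (q + 1) - orbitDet r t q =
    r ^ q * (1 + r ^ 2 - 2 * r * cos t) * sin ((q + 1 : ℕ) * t) := by
  have hnext : ((q + 1 + 1 : ℕ) : ℝ) * t = (q + 1 : ℕ) * t + t := by push_cast; ring
  have hprev : (q : ℝ) * t = (q + 1 : ℕ) * t - t := by push_cast; ring
  simp only [orbitDet, orbitPoint, det_fin_three, hnext, hprev]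
  generalize ((q + 1 : ℕ) : ℝ) * t = θ
  simp [cos_add, sin_add, cos_sub, sin_sub]
  ring

theorem orbitPoint_add (h : orbitPoint r t (k + 2) = a • orbitPoint r t 0 + a • orbitPoint r t 1)
    (j : ℕ) : orbitPoint r t (k + 2 + j) = a • orbitPoint r t j + a • orbitPoint r t (j + 1) := by
  rw [← orbitMatrix_pow_mulVec_orbitPoint, h, mulVec_add, mulVec_smul, mulVec_smul,
    orbitMatrix_pow_mulVec_orbitPoint, orbitMatrix_pow_mulVec_orbitPoint, zero_add, add_comm 1]

theorem mul_orbitDet (h : orbitPoint r t (k + 2) = a • orbitPoint r t 0 + a • orbitPoint r t 1) :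
    r * orbitDet r t k =
      a * det (of ![orbitPoint r t (k + 1), orbitPoint r t 0, orbitPoint r t 1]) := by
  have hshift := det_orbitPoint_add r t 1 0 k (k + 1)
  rw [pow_one, zero_add, h] at hshift
  rw [orbitDet, ← hshift]
  simp [det_fin_three]
  ring

theorem orbitDet_succ_eq_neg
    (h : orbitPoint r t (k + 2) = a • orbitPoint r t 0 + a • orbitPoint r t 1) :
    orbitDet r t (k + 1) = -(r * orbitDet r t k) := by
  rw [mul_orbitDet h, orbitDet, h]
  simp [det_fin_three]
  ring

theorem one_add_sq_sub_two_mul_cos_pos (r : ℝ) (ht : 0 < sin t) :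
    0 < 1 + r ^ 2 - 2 * r * cos t := by
  nlinarith [sin_sq_add_cos_sq t, sq_nonneg (r - cos t), pow_pos ht 2]

theorem orbitDet_pos (hr : 0 < r) (ht : 0 < sin t) (hk : sin ((k + 1 : ℕ) * t) < 0)
    (h : orbitPoint r t (k + 2) = a • orbitPoint r t 0 + a • orbitPoint r t 1) :
    0 < orbitDet r t k := by
  have hdecr : orbitDet r t (k + 1) - orbitDet r t k < 0 := by
    rw [orbitDet_succ_sub]
    exact mul_neg_of_pos_of_neg
      (mul_pos (pow_pos hr k) (one_add_sq_sub_two_mul_cos_pos r ht)) hk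
  rw [orbitDet_succ_eq_neg h] at hdecr
  nlinarith

/-- `orbitDet r t q` increases from `0` as long as `q * t ≤ π`, and then decreases as long as
`q * t ≤ 2 * π`. -/
theorem orbitDet_nonneg (hr : 0 < r) (ht : 0 < t) (hsin : 0 < sin t) (hk : k * t ≤ 2 * π)
    (hpos : 0 ≤ orbitDet r t k) (hq : q ≤ k) : 0 ≤ orbitDet r t q := by
  have hC := one_add_sq_sub_two_mul_cos_pos r hsin
  rcases le_or_gt (q * t) π with hqt | hqt
  · induction q with
    | zero => exact (orbitDet_zero r t).ge
    | succ q ih =>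
      have hq' : (q : ℝ) * t ≤ (q + 1 : ℕ) * t := by gcongr; exact q.le_succ
      have hincr : 0 ≤ orbitDet r t (q + 1) - orbitDet r t q := by
        have := sin_nonneg_of_nonneg_of_le_pi (by positivity) hqt
        rw [orbitDet_succ_sub]
        positivity
      linarith [ih (by omega) (hq'.trans hqt)]
  · have hanti : AntitoneOn (orbitDet r t) (Icc q k) := by
      refine antitoneOn_of_succ_le ordConnected_Icc fun i _ hi hi' => ?_
      have hqi : (q : ℝ) * t ≤ (i + 1 : ℕ) * t := by gcongr; exact hi.1.trans i.le_succ
      have hik : (i + 1 : ℕ) * t ≤ k * t := by gcongr; exact hi'.2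
      have hneg : sin ((i + 1 : ℕ) * t) ≤ 0 := by
        rw [← neg_nonneg, ← sin_sub_pi]
        exact sin_nonneg_of_nonneg_of_le_pi (by linarith) (by linarith)
      rw [← sub_nonpos, Order.succ_eq_add_one, orbitDet_succ_sub]
      exact mul_nonpos_of_nonneg_of_nonpos (by positivity) hneg
    exact hpos.trans (hanti (left_mem_Icc.2 hq) (right_mem_Icc.2 hq) hq)

/-- The parameters of the extremal cone with `k + 2` generators: the next orbit point lies in the
relative interior of the face spanned by the first two. -/
structure IsExtremalParams (k : ℕ) (r t a : ℝ) : Prop where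
  r_pos : 0 < r
  a_pos : 0 < a
  t_pos : 0 < t
  t_lt : t < π
  lt_angle : π < (k + 1 : ℕ) * t
  angle_lt : (k + 1 : ℕ) * t < 2 * π
  orbitPoint_eq : orbitPoint r t (k + 2) = a • orbitPoint r t 0 + a • orbitPoint r t 1

theorem exists_pos_pow_eq_mul_one_add (ha : 0 < a) (hk : 2 ≤ k) :
    ∃ r : ℝ, 0 < r ∧ r ^ k = a * (1 + r) := by
  have hcont : ContinuousOn (fun x : ℝ => x ^ k - a * (1 + x)) (Icc 0 (1 + 2 * a)) := by fun_prop
  have hzero : (0 : ℝ) ^ k = 0 := zero_pow (by omega)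
  have hlarge : (1 + 2 * a) ^ 2 ≤ (1 + 2 * a) ^ k := pow_le_pow_right₀ (by linarith) hk
  obtain ⟨r, hr, hroot⟩ := intermediate_value_Icc (by linarith) hcont
    (show (0 : ℝ) ∈ Icc _ _ from ⟨by simp [hzero, ha.le], by nlinarith⟩)
  have hroot : r ^ k = a * (1 + r) := sub_eq_zero.1 hroot
  refine ⟨r, hr.1.lt_of_ne' ?_, hroot⟩
  rintro rfl
  rw [hzero] at hroot
  linarith

/-- With `t = 2 * h`, the angle `(k + 2) * t` is `h` modulo `2 * π`, and the unit vector at angle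
`h` bisects those at angles `0` and `t`. -/
theorem exists_isExtremalParams (hk : 1 ≤ k) : ∃ r t a, IsExtremalParams k r t a := by
  have hk' : (1 : ℝ) ≤ k := by exact_mod_cast hk
  set h : ℝ := 2 * π / (2 * k + 3) with hh
  have hmul : h * (2 * k + 3) = 2 * π := by rw [hh]; field_simp
  have hpos : 0 < h := by positivity
  have hlt : h < π / 2 := by nlinarith
  have hcos : 0 < cos h := cos_pos_of_mem_Ioo ⟨by linarith, hlt⟩
  have hangle : ((k + 2 : ℕ) : ℝ) * (2 * h) = h + 2 * π := by push_cast; linarith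
  obtain ⟨r, hr, hroot⟩ :=
    exists_pos_pow_eq_mul_one_add (a := 1 / (2 * cos h)) (by positivity) (Nat.le_add_left 2 k)
  refine ⟨r, 2 * h, 1 / (2 * cos h), hr, by positivity, by positivity, by linarith, ?_, ?_, ?_⟩
  · push_cast
    nlinarith
  · push_cast
    nlinarith
  · ext i
    fin_cases i
    · simp [orbitPoint, hroot]
      ring
    · simp only [orbitPoint, hangle, cos_add_two_pi]
      simp [cos_two_mul]
      field_simp
      ring
    · simp only [orbitPoint, hangle, sin_add_two_pi]
      simp [sin_two_mul]
      field_simp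

/-- The cone generated by the first `m` orbit points. -/
abbrev extremalCone (r t : ℝ) (m : ℕ) : PointedCone ℝ (Fin 3 → ℝ) :=
  orbitCone (orbitMatrix r t) (orbitPoint r t 0) m

theorem orbitPoint_mem_extremalCone (hk : k < m) : orbitPoint r t k ∈ extremalCone r t m := by
  simpa only [orbitMatrix_pow_mulVec_orbitPoint, zero_add] using
    pow_mulVec_mem_orbitCone (A := orbitMatrix r t) (v := orbitPoint r t 0) hk

theorem coe_extremalCone (r t : ℝ) (m : ℕ) :
    (extremalCone r t m : Set (Fin 3 → ℝ)) = ConeGen fun j : Fin m => orbitPoint r t j := by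
  simp only [coneGen_eq_hull, extremalCone, orbitCone, orbitMatrix_pow_mulVec_orbitPoint, zero_add]

theorem ncard_extremeRays_extremalCone_le (r t : ℝ) (m : ℕ) :
    (ExtremeRays (extremalCone r t m : Set (Fin 3 → ℝ))).ncard ≤ m :=
  coe_extremalCone r t m ▸ ncard_extremeRays_le _

namespace IsExtremalParams

theorem kNonneg (h : IsExtremalParams k r t a) :
    KNonneg (extremalCone r t (k + 2) : Set (Fin 3 → ℝ)) (orbitMatrix r t) := by
  refine kNonneg_orbitCone ?_
  rw [orbitMatrix_pow_mulVec_orbitPoint, zero_add, h.orbitPoint_eq]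
  exact add_mem (PointedCone.smul_mem _ h.a_pos.le (orbitPoint_mem_extremalCone (by omega)))
    (PointedCone.smul_mem _ h.a_pos.le (orbitPoint_mem_extremalCone (by omega)))

theorem sin_pos (h : IsExtremalParams k r t a) : 0 < sin t :=
  sin_pos_of_pos_of_lt_pi h.t_pos h.t_lt

theorem orbitDet_pos (h : IsExtremalParams k r t a) : 0 < orbitDet r t k := by
  refine _root_.orbitDet_pos h.r_pos h.sin_pos ?_ h.orbitPoint_eq
  rw [← neg_pos, ← sin_sub_pi]
  exact sin_pos_of_pos_of_lt_pi (by linarith [h.lt_angle]) (by linarith [h.angle_lt])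

/-- Two steps of the recurrence express the point as a positive combination of the linearly
independent points `k + 1`, `0` and `1`. -/
theorem orbitPoint_mem_interior (h : IsExtremalParams k r t a) :
    orbitPoint r t (2 * k + 3) ∈ interior (extremalCone r t (k + 2) : Set (Fin 3 → ℝ)) := by
  let w := ![orbitPoint r t (k + 1), orbitPoint r t 0, orbitPoint r t 1]
  have hdet : (of w).det ≠ 0 := fun h0 =>
    (mul_pos h.r_pos h.orbitDet_pos).ne' (by rw [mul_orbitDet h.orbitPoint_eq, h0, mul_zero])
  let b := basisOfLinearIndependentOfCardEqFinrank
    (linearIndependent_rows_of_det_ne_zero hdet) (by simp)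
  have hb : ∀ i, b i = w i :=
    congrFun (coe_basisOfLinearIndependentOfCardEqFinrank _ _)
  have hcomb : orbitPoint r t (2 * k + 3) = ∑ i, ![a, a * a, a * a] i • b i := by
    have hlast : orbitPoint r t (k + 1 + 1) = _ := h.orbitPoint_eq
    rw [show 2 * k + 3 = k + 2 + (k + 1) by ring, orbitPoint_add h.orbitPoint_eq, hlast]
    simp [hb, w, Fin.sum_univ_three, smul_smul, add_assoc]
  have hmem : ∀ i, b i ∈ extremalCone r t (k + 2) := by
    simp [hb, w, Fin.forall_fin_succ, orbitPoint_mem_extremalCone]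
  refine hcomb ▸ sum_smul_mem_interior b hmem ?_
  simp [Fin.forall_fin_succ, h.a_pos]

theorem det_orbitPoint_nonneg (h : IsExtremalParams k r t a) {j : ℕ} (hj : j < k + 2) :
    0 ≤ det (of ![orbitPoint r t j, orbitPoint r t k, orbitPoint r t (k + 1)]) := by
  rcases Nat.lt_succ_iff_lt_or_eq.1 hj with hjk | rfl
  · obtain ⟨q, rfl⟩ := Nat.exists_eq_add_of_le' (Nat.lt_succ_iff.1 hjk)
    have hshift := det_orbitPoint_add r t j 0 q (q + 1)
    rw [zero_add, add_right_comm] at hshift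
    have hle : ((q + j : ℕ) : ℝ) * t ≤ 2 * π := by
      refine le_trans ?_ h.angle_lt.le
      have := h.t_pos
      gcongr ?_ * t
      exact_mod_cast Nat.le_succ _
    rw [hshift]
    exact mul_nonneg (pow_nonneg h.r_pos.le j)
      (orbitDet_nonneg h.r_pos h.t_pos h.sin_pos hle h.orbitDet_pos.le (Nat.le_add_right q j))
  · exact (det_zero_of_row_eq (i := 0) (j := 2) (by decide) rfl).ge

/-- The plane through the points `k` and `k + 1` supports the cone and contains the point
`2 * k + 2`, which is a combination of the two. -/
theorem orbitPoint_notMem_interior (h : IsExtremalParams k r t a) :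
    orbitPoint r t (2 * k + 2) ∉ interior (extremalCone r t (k + 2) : Set (Fin 3 → ℝ)) := by
  let f : (Fin 3 → ℝ) →ₗ[ℝ] ℝ := detRowAlternating.toMultilinearMap.toLinearMap
    ![0, orbitPoint r t k, orbitPoint r t (k + 1)] 0
  have hf : ∀ v, f v = det (of ![v, orbitPoint r t k, orbitPoint r t (k + 1)]) := fun v => by
    change det (Function.update _ 0 v) = _
    congr
    ext i
    fin_cases i <;> rfl
  have hf0 : f (orbitPoint r t 0) = orbitDet r t k := hf _
  have hfnonneg : ∀ v ∈ extremalCone r t (k + 2), 0 ≤ f v := by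
    suffices extremalCone r t (k + 2) ≤ (PointedCone.positive ℝ ℝ).comap f from fun v hv => this hv
    refine Submodule.span_le.2 ?_
    rintro _ ⟨j, rfl⟩
    simpa [orbitMatrix_pow_mulVec_orbitPoint, hf] using h.det_orbitPoint_nonneg j.2
  have hzero : f (orbitPoint r t (2 * k + 2)) = 0 := by
    rw [show 2 * k + 2 = k + 2 + k by ring, orbitPoint_add h.orbitPoint_eq, hf]
    simp [det_fin_three]
    ring
  intro hint
  exact h.orbitDet_pos.ne' (hf0 ▸ (FaceLE.of_mem_interior (orbitPoint r t 0) hint).apply_eq_zero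
    hfnonneg (orbitPoint_mem_extremalCone (by omega)) hzero)

theorem isPolyhedralCone (h : IsExtremalParams k r t a) :
    IsPolyhedralCone (extremalCone r t (k + 2) : Set (Fin 3 → ℝ)) := by
  have hint := h.orbitPoint_mem_interior
  rw [coe_extremalCone] at hint ⊢
  exact isPolyhedralCone_coneGen (f := LinearMap.proj 0) (fun j => pow_pos h.r_pos j) ⟨_, hint⟩

theorem kPrimitive (h : IsExtremalParams k r t a) :
    KPrimitive (extremalCone r t (k + 2) : Set (Fin 3 → ℝ)) (orbitMatrix r t) := by
  refine ⟨h.kNonneg, 2 * k + 3, by omega, kPositive_pow_orbitCone h.kNonneg ?_⟩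
  rw [orbitMatrix_pow_mulVec_orbitPoint, zero_add]
  exact h.orbitPoint_mem_interior

theorem expnt_extremalCone (h : IsExtremalParams k r t a) :
    expnt (extremalCone r t (k + 2) : Set (Fin 3 → ℝ)) (orbitMatrix r t) = 2 * k + 3 := by
  apply expnt_orbitCone h.kNonneg (by omega) <;>
    simp only [orbitMatrix_pow_mulVec_orbitPoint, zero_add]
  · exact h.orbitPoint_mem_interior
  · exact h.orbitPoint_notMem_interior
  · exact fun j hj => (pow_pos h.r_pos j).ne' (congrFun hj 0)

end IsExtremalParams

end Example

/-- For `m ≥ 3`, the maximum of `γ(K)` over `K ∈ P(m,3)` is `2m - 1`: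
every `K`-primitive matrix has exponent at most `2m - 1`, and the bound is attained. -/
theorem stmt_6 (m : ℕ) (hm : 3 ≤ m) :
    (∀ (K : Set (Fin 3 → ℝ)) (A : Matrix (Fin 3) (Fin 3) ℝ),
      MemP m K → KPrimitive K A → expnt K A ≤ 2 * m - 1) ∧
    (∃ (K : Set (Fin 3 → ℝ)) (A : Matrix (Fin 3) (Fin 3) ℝ),
      MemP m K ∧ KPrimitive K A ∧ expnt K A = 2 * m - 1) := by
  constructor
  · rintro K A ⟨hK, rfl⟩ hA
    have hexp := hA.expnt_le (by norm_num) hK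
    omega
  · obtain ⟨k, rfl⟩ := Nat.exists_eq_add_of_le' (by omega : 2 ≤ m)
    obtain ⟨r, t, a, h⟩ := exists_isExtremalParams (show 1 ≤ k by omega)
    have hexp := h.expnt_extremalCone
    refine ⟨extremalCone r t (k + 2), orbitMatrix r t, ⟨h.isPolyhedralCone, ?_⟩, h.kPrimitive,
      by omega⟩
    have hlower := h.kPrimitive.expnt_le (by norm_num) h.isPolyhedralCone
    have hupper := ncard_extremeRays_extremalCone_le r t (k + 2)
    omega
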